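/- Let A be a finite set and let X ⊆ A^ℤ be a nonempty strongly irreducible subshift. Then there exists a shift-invariant Borel probability measure on X whose support is all of X. -/

import Mathlib

/-!
A cylinder `C` of `X` can, by strong irreducibility, be visited along an arithmetic progression of
bounded step `N`: gluing one translate after another gives, for every `K`, a point of `X` whose
orbit under the left shift is in `C` at the times `0, N, …, (K - 1) N` (`exists_returns`).
The empirical measures of these orbit segments of length `K N` give `C` mass at least `1 / N`, so
any weak limit is an invariant probability measure carried by `X` that charges `C`
(`exists_invariant_of_returns`, a Krylov–Bogolyubov argument; `C` is closed, so its mass is upper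
semicontinuous). Since `A^ℤ` is second countable, countably many such measures suffice to charge
every nonempty open subset of `X`, and their convex combination with weights `2⁻¹, 2⁻², …` is the
required measure.
-/

/-- The shift action of `ℤ` on configurations `x : ℤ → A`: `(n • x)(m) = x(m - n)`. -/
def shiftZ {A : Type*} (n : ℤ) (x : ℤ → A) : ℤ → A :=
  fun m => x (m - n)

/-- A subshift is a closed, shift-invariant subset of `A^ℤ` (with the prodiscrete
topology). -/
def IsSubshiftZ {A : Type*} [TopologicalSpace A] (X : Set (ℤ → A)) : Prop :=
  IsClosed X ∧ ∀ (n : ℤ) (x : ℤ → A), x ∈ X → shiftZ n x ∈ X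

/-- A configuration is periodic if its orbit under the shift action is finite. -/
def IsPeriodicZ {A : Type*} (x : ℤ → A) : Prop :=
  (Set.range fun n : ℤ => shiftZ n x).Finite

/-- A subshift `X ⊆ A^ℤ` is strongly irreducible if there is a finite `Δ ⊆ ℤ` such
that whenever `Ω₁, Ω₂` are finite subsets of `ℤ` with `(Ω₁ - Δ) ∩ Ω₂ = ∅`, any two
configurations of `X` can be glued along `Ω₁` and `Ω₂` inside `X`. -/
def IsStronglyIrreducibleZ {A : Type*} (X : Set (ℤ → A)) : Prop :=
  ∃ Δ : Finset ℤ, ∀ Ω₁ Ω₂ : Finset ℤ,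
    (∀ a ∈ Ω₁, ∀ d ∈ Δ, a - d ∉ Ω₂) →
    ∀ x₁ ∈ X, ∀ x₂ ∈ X, ∃ x ∈ X,
      (∀ i ∈ Ω₁, x i = x₁ i) ∧ (∀ i ∈ Ω₂, x i = x₂ i)

/-- The word `w` appears as a subword of the configuration `x : ℤ → A`. -/
def AppearsIn {A : Type*} (w : List A) (x : ℤ → A) : Prop :=
  ∃ i : ℤ, ∀ k : Fin w.length, x (i + (k.1 : ℤ)) = w.get k

/-- The language of `X ⊆ A^ℤ`: all finite words appearing in configurations of `X`. -/
def lang {A : Type*} (X : Set (ℤ → A)) : Set (List A) :=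
  {w : List A | ∃ x ∈ X, AppearsIn w x}

open MeasureTheory Filter Topology
open scoped ENNReal BoundedContinuousFunction

/-- The empirical measure `(1 / M) ∑_{j < M} δ_{T^j x}` of an orbit segment of length `M`. -/
noncomputable def empiricalMeasure {E : Type*} [MeasurableSpace E] (T : E → E) (x : E) (M : ℕ) :
    Measure E :=
  (M : ℝ≥0∞)⁻¹ • ∑ j ∈ Finset.range M, Measure.dirac (T^[j] x)

section Empirical

variable {E : Type*} [MeasurableSpace E] (T : E → E) (x : E)

lemma empiricalMeasure_apply (M : ℕ) {S : Set E} (hS : MeasurableSet S) :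
    empiricalMeasure T x M S =
      (M : ℝ≥0∞)⁻¹ * ∑ j ∈ Finset.range M, S.indicator 1 (T^[j] x) := by
  simp [empiricalMeasure, Measure.dirac_apply' _ hS]

lemma empiricalMeasure_eq_one {M : ℕ} (hM : M ≠ 0) {S : Set E} (hS : MeasurableSet S)
    (h : ∀ j, T^[j] x ∈ S) : empiricalMeasure T x M S = 1 := by
  rw [empiricalMeasure_apply T x M hS]
  simp only [Set.indicator_of_mem (h _), Pi.one_apply, Finset.sum_const, Finset.card_range,
    nsmul_eq_mul, mul_one]
  exact ENNReal.inv_mul_cancel (by simpa using hM) (ENNReal.natCast_ne_top M)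

lemma isProbabilityMeasure_empiricalMeasure {M : ℕ} (hM : M ≠ 0) :
    IsProbabilityMeasure (empiricalMeasure T x M) :=
  ⟨empiricalMeasure_eq_one T x hM MeasurableSet.univ fun _ => Set.mem_univ _⟩

lemma inv_le_empiricalMeasure {K N : ℕ} (hK : K ≠ 0) (hN : N ≠ 0) {C : Set E}
    (hC : MeasurableSet C) (h : ∀ k < K, T^[k * N] x ∈ C) :
    (N : ℝ≥0∞)⁻¹ ≤ empiricalMeasure T x (K * N) C := by
  have hinj : Set.InjOn (fun k => k * N) (Finset.range K : Set ℕ) :=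
    fun a _ b _ hab => Nat.eq_of_mul_eq_mul_right (Nat.pos_of_ne_zero hN) hab
  have hsub : (Finset.range K).image (fun k => k * N) ⊆ Finset.range (K * N) := by
    intro j hj
    obtain ⟨k, hk, rfl⟩ := Finset.mem_image.1 hj
    exact Finset.mem_range.2
      (Nat.mul_lt_mul_of_pos_right (Finset.mem_range.1 hk) (Nat.pos_of_ne_zero hN))
  have hsum : (K : ℝ≥0∞) ≤ ∑ j ∈ Finset.range (K * N), C.indicator 1 (T^[j] x) := by
    refine le_trans (le_of_eq ?_) (Finset.sum_le_sum_of_subset hsub)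
    rw [Finset.sum_image hinj, Finset.sum_congr rfl fun k hk =>
      Set.indicator_of_mem (h k (Finset.mem_range.1 hk)) 1]
    simp
  have hK0 : (K : ℝ≥0∞) ≠ 0 := by simpa using hK
  calc (N : ℝ≥0∞)⁻¹ = ((K * N : ℕ) : ℝ≥0∞)⁻¹ * K := by
        rw [Nat.cast_mul, ENNReal.mul_inv (Or.inl hK0) (Or.inl (ENNReal.natCast_ne_top K)),
          mul_right_comm, ENNReal.inv_mul_cancel hK0 (ENNReal.natCast_ne_top K), one_mul]
    _ ≤ _ := by
        rw [empiricalMeasure_apply T x _ hC]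
        gcongr

lemma integral_empiricalMeasure [TopologicalSpace E] [BorelSpace E] (M : ℕ) (f : E →ᵇ ℝ) :
    ∫ y, f y ∂empiricalMeasure T x M = (M : ℝ)⁻¹ * ∑ j ∈ Finset.range M, f (T^[j] x) := by
  rw [empiricalMeasure, integral_smul_measure,
    integral_finsetSum_measure fun j _ => f.integrable _]
  simp [integral_dirac' _ _ f.continuous.stronglyMeasurable]

/-- Moving an empirical measure by `T` changes it by two boundary terms only. -/
lemma abs_integral_empiricalMeasure_sub_le [TopologicalSpace E] [BorelSpace E] (hT : Continuous T)
    (M : ℕ) (f : E →ᵇ ℝ) :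
    |∫ y, f (T y) ∂empiricalMeasure T x M - ∫ y, f y ∂empiricalMeasure T x M| ≤
      (M : ℝ)⁻¹ * (2 * ‖f‖) := by
  have h := integral_empiricalMeasure T x M (f.compContinuous ⟨T, hT⟩)
  simp only [BoundedContinuousFunction.compContinuous_apply, ContinuousMap.coe_mk,
    ← Function.iterate_succ_apply'] at h
  rw [h, integral_empiricalMeasure, ← mul_sub, ← Finset.sum_sub_distrib,
    Finset.sum_range_sub fun j => f (T^[j] x), abs_mul, abs_of_nonneg (by positivity)]
  gcongr
  rw [two_mul]
  exact (abs_sub _ _).trans (add_le_add (f.norm_coe_le_norm _) (f.norm_coe_le_norm _))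

end Empirical

/-- Krylov–Bogolyubov with a lower bound: if a closed set `C` is visited, by arbitrarily long orbit
segments in `X`, along progressions of a fixed step, then some invariant probability measure on `X`
charges `C`. -/
lemma exists_invariant_of_returns {E : Type*} [TopologicalSpace E] [CompactSpace E] [T2Space E]
    [HasOuterApproxClosed E] [MeasurableSpace E] [BorelSpace E] {T : E → E} (hT : Continuous T)
    {X C : Set E} (hX : IsClosed X) (hTX : Set.MapsTo T X X) (hC : IsClosed C) {N : ℕ}
    (hN : N ≠ 0) (h : ∀ K : ℕ, ∃ x ∈ X, ∀ k < K, T^[k * N] x ∈ C) :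
    ∃ μ : Measure E, IsProbabilityMeasure μ ∧ μ X = 1 ∧ μ.map T = μ ∧ 0 < μ C := by
  choose x hxX hxC using h
  have hne (K : ℕ) : (K + 1) * N ≠ 0 := Nat.mul_ne_zero K.succ_ne_zero hN
  let ν (K : ℕ) : ProbabilityMeasure E :=
    ⟨empiricalMeasure T (x (K + 1)) ((K + 1) * N), isProbabilityMeasure_empiricalMeasure _ _ (hne K)⟩
  -- A limit along an ultrafilter spares the metrizability needed to extract a subsequence.
  obtain ⟨μ, -, hμ⟩ := isCompact_univ.ultrafilter_le_nhds ((hyperfilter ℕ).map ν) (by simp)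
  have hlim : Tendsto ν (hyperfilter ℕ) (𝓝 μ) := hμ
  have hclosed {F : Set E} (hF : IsClosed F) {c : ℝ≥0∞} (hc : ∀ K, c ≤ (ν K : Measure E) F) :
      c ≤ (μ : Measure E) F :=
    (le_limsup_of_frequently_le (Frequently.of_forall hc)).trans
      (ProbabilityMeasure.limsup_measure_closed_le_of_tendsto hlim hF)
  refine ⟨μ, inferInstance, le_antisymm prob_le_one (hclosed hX fun K => ?_), ?_, ?_⟩
  · exact (empiricalMeasure_eq_one _ _ (hne K) hX.measurableSet
      fun j => hTX.iterate j (hxX _)).ge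
  · have : IsProbabilityMeasure ((μ : Measure E).map T) :=
      Measure.isProbabilityMeasure_map hT.aemeasurable
    refine ext_of_forall_integral_eq_of_IsFiniteMeasure fun f => ?_
    rw [integral_map hT.aemeasurable f.continuous.aestronglyMeasurable]
    rw [ProbabilityMeasure.tendsto_iff_forall_integral_tendsto] at hlim
    have h1 := (hlim (f.compContinuous ⟨T, hT⟩)).sub (hlim f)
    have h2 : Tendsto (fun K : ℕ => (((K + 1) * N : ℕ) : ℝ)⁻¹ * (2 * ‖f‖)) (hyperfilter ℕ)
        (𝓝 0) := by
      refine Tendsto.mono_left ?_ Nat.hyperfilter_le_atTop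
      rw [← zero_mul (2 * ‖f‖)]
      refine (tendsto_inv_atTop_zero.comp (tendsto_natCast_atTop_atTop.comp ?_)).mul_const _
      exact tendsto_atTop_mono (fun K => by
        have := Nat.le_mul_of_pos_right (K + 1) (Nat.pos_of_ne_zero hN)
        simp only [id]; omega) tendsto_id
    have h3 : Tendsto (fun K => ∫ y, f (T y) ∂(ν K : Measure E) - ∫ y, f y ∂(ν K : Measure E))
        (hyperfilter ℕ) (𝓝 0) := squeeze_zero_norm (fun K =>
      abs_integral_empiricalMeasure_sub_le T (x (K + 1)) hT ((K + 1) * N) f) h2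
    exact sub_eq_zero.1 (tendsto_nhds_unique h1 h3)
  · refine lt_of_lt_of_le (ENNReal.inv_pos.2 (ENNReal.natCast_ne_top N)) (hclosed hC fun K => ?_)
    exact inv_le_empiricalMeasure _ _ K.succ_ne_zero hN hC.measurableSet (hxC _)

section Shift

variable {A : Type*}

lemma continuous_shiftZ [TopologicalSpace A] (n : ℤ) : Continuous (shiftZ (A := A) n) :=
  continuous_pi fun m => continuous_apply (m - n)

lemma shiftZ_comp (m n : ℤ) : shiftZ (A := A) m ∘ shiftZ n = shiftZ (m + n) := by
  funext x i
  simp [shiftZ, sub_sub]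

lemma iterate_shiftZ_neg_one_apply (k : ℕ) (x : ℤ → A) (i : ℤ) :
    (shiftZ (-1))^[k] x i = x (i + k) := by
  induction k generalizing x with
  | zero => simp
  | succ k ih =>
    rw [Function.iterate_succ_apply, ih]
    simp only [shiftZ]
    congr 1
    push_cast
    ring

/-- Invariance under the generator `-1` of `ℤ` gives invariance under the whole action. -/
lemma map_shiftZ_eq [TopologicalSpace A] [MeasurableSpace (ℤ → A)] [BorelSpace (ℤ → A)]
    {μ : Measure (ℤ → A)} (h : μ.map (shiftZ (-1)) = μ) (n : ℤ) : μ.map (shiftZ n) = μ := by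
  have hm (n : ℤ) : Measurable (shiftZ (A := A) n) := (continuous_shiftZ n).measurable
  have hadd (m n : ℤ) : (μ.map (shiftZ n)).map (shiftZ m) = μ.map (shiftZ (m + n)) := by
    rw [Measure.map_map (hm m) (hm n), shiftZ_comp]
  have h0 : μ.map (shiftZ 0) = μ := by
    have : shiftZ (A := A) 0 = id := by
      funext x i
      simp [shiftZ]
    rw [this, Measure.map_id]
  have h1 : μ.map (shiftZ 1) = μ := by
    conv_lhs => rw [← h]
    rw [hadd]
    simpa using h0
  induction n using Int.induction_on with
  | zero => exact h0
  | succ n ih => rw [← hadd, h1, ih]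
  | pred n ih => rw [sub_eq_add_neg, ← hadd, h, ih]

/-- In a strongly irreducible subshift, the central pattern of radius `n` of a point `y` recurs
along progressions of a fixed step `N`, in arbitrarily long orbit segments. -/
lemma exists_returns [TopologicalSpace A] {X : Set (ℤ → A)} (hX : IsSubshiftZ X)
    (hsi : IsStronglyIrreducibleZ X) {y : ℤ → A} (hy : y ∈ X) (n : ℕ) :
    ∃ N : ℕ, N ≠ 0 ∧ ∀ K : ℕ, ∃ x ∈ X, ∀ k < K, ∀ i : ℤ, |i| ≤ n →
      (shiftZ (-1))^[k * N] x i = y i := by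
  obtain ⟨Δ, hΔ⟩ := hsi
  let D : ℕ := ∑ d ∈ Δ, d.natAbs
  have hD : ∀ d ∈ Δ, |d| ≤ D := fun d hd => by
    have := Finset.single_le_sum (f := Int.natAbs) (fun _ _ => Nat.zero_le _) hd
    rw [Int.abs_eq_natAbs]
    exact_mod_cast this
  -- Windows of radius `n` at distance `N` are more than `D` apart.
  refine ⟨2 * n + D + 1, by omega, fun K => ?_⟩
  set N := 2 * n + D + 1 with hN
  simp only [iterate_shiftZ_neg_one_apply]
  induction K with
  | zero => exact ⟨y, hy, by simp⟩
  | succ K ih =>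
    obtain ⟨x, hx, hxy⟩ := ih
    obtain ⟨z, hz, hz1, hz2⟩ := hΔ
      (Finset.Icc (-n) (K * N - N + n)) (Finset.Icc (K * N - n) (K * N + n))
      (fun a ha d hd hmem => by
        have := abs_le.1 (hD d hd)
        rw [Finset.mem_Icc] at ha hmem
        push_cast [hN] at ha hmem
        linarith [ha.2, hmem.1])
      x hx (shiftZ (K * N) y) (hX.2 _ _ hy)
    refine ⟨z, hz, fun k hk i hi => ?_⟩
    rw [abs_le] at hi
    rcases Nat.lt_succ_iff_lt_or_eq.1 hk with hk | rfl
    · rw [hz1, hxy k hk i (abs_le.2 hi)]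
      have h1 : (((k + 1) * N : ℕ) : ℤ) ≤ ((K * N : ℕ) : ℤ) := by
        exact_mod_cast Nat.mul_le_mul_right N hk
      have h2 : (0 : ℤ) ≤ ((k * N : ℕ) : ℤ) := Int.natCast_nonneg _
      push_cast at h1 h2 ⊢
      rw [Finset.mem_Icc]
      constructor <;> linarith [hi.1, hi.2]
    · rw [hz2]
      · simp [shiftZ]
      · push_cast
        rw [Finset.mem_Icc]
        constructor <;> linarith [hi.1, hi.2]

/-- Each nonempty relatively open subset of `X` is charged by some invariant probability measure
on `X`. -/
lemma exists_invariant_pos [Finite A] [TopologicalSpace A] [DiscreteTopology A]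
    [MeasurableSpace (ℤ → A)] [BorelSpace (ℤ → A)] {X : Set (ℤ → A)} (hX : IsSubshiftZ X)
    (hsi : IsStronglyIrreducibleZ X) {U : Set (ℤ → A)} (hU : IsOpen U) (hne : (U ∩ X).Nonempty) :
    ∃ μ : Measure (ℤ → A), IsProbabilityMeasure μ ∧ μ X = 1 ∧ μ.map (shiftZ (-1)) = μ ∧
      0 < μ U := by
  obtain ⟨y, hyU, hyX⟩ := hne
  obtain ⟨I, u, hu, hIU⟩ := isOpen_pi_iff.1 hU y hyU
  let n : ℕ := ∑ i ∈ I, i.natAbs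
  have hn : ∀ i ∈ I, |i| ≤ n := fun i hi => by
    have := Finset.single_le_sum (f := Int.natAbs) (fun _ _ => Nat.zero_le _) hi
    rw [Int.abs_eq_natAbs]
    exact_mod_cast this
  obtain ⟨N, hN, hret⟩ := exists_returns hX hsi hyX n
  have hC : IsClosed {x : ℤ → A | ∀ i : ℤ, |i| ≤ n → x i = y i} := by
    simp only [Set.ofPred_forall]
    exact isClosed_iInter fun i => isClosed_iInter fun _ =>
      isClosed_eq (continuous_apply i) continuous_const
  obtain ⟨μ, hμ, hμX, hinv, hpos⟩ := exists_invariant_of_returns (continuous_shiftZ (-1)) hX.1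
    (fun x hx => hX.2 (-1) x hx) hC hN hret
  refine ⟨μ, hμ, hμX, hinv, hpos.trans_le (measure_mono fun x hx => hIU fun i hi => ?_)⟩
  rw [hx i (hn i hi)]
  exact (hu i hi).2

end Shift

open MeasureTheory in
/-- If `A` is a finite set and `X ⊆ A^ℤ` is a nonempty strongly irreducible subshift,
then there is a shift-invariant Borel probability measure concentrated on `X` whose
support is all of `X` (every nonempty relatively open subset of `X` has positive
measure). -/
theorem exists_invariant_measure_full_support_Z
    {A : Type*} [Finite A] [TopologicalSpace A] [DiscreteTopology A]
    [MeasurableSpace (ℤ → A)] [BorelSpace (ℤ → A)]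
    (X : Set (ℤ → A)) (hne : X.Nonempty) (hX : IsSubshiftZ X)
    (hsi : IsStronglyIrreducibleZ X) :
    ∃ μ : Measure (ℤ → A), IsProbabilityMeasure μ ∧ μ X = 1 ∧
      (∀ n : ℤ, μ.map (shiftZ n) = μ) ∧
      (∀ U : Set (ℤ → A), IsOpen U → (U ∩ X).Nonempty → 0 < μ (U ∩ X)) := by
  let B : Set (Set (ℤ → A)) := {b ∈ TopologicalSpace.countableBasis (ℤ → A) | (b ∩ X).Nonempty}
  have hbasis := TopologicalSpace.isBasis_countableBasis (ℤ → A)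
  have hBc : B.Countable := (TopologicalSpace.countable_countableBasis _).mono fun _ h => h.1
  have hBne : B.Nonempty := by
    obtain ⟨y, hy⟩ := hne
    obtain ⟨b, hb, hyb, -⟩ := hbasis.exists_subset_of_mem_open (Set.mem_univ y) isOpen_univ
    exact ⟨b, hb, y, hyb, hy⟩
  obtain ⟨b, hb⟩ := hBc.exists_eq_range hBne
  have hbB (n : ℕ) : b n ∈ B := hb ▸ Set.mem_range_self n
  choose ν hν hνX hinv hpos using fun n : ℕ =>
    exists_invariant_pos hX hsi (hbasis.isOpen (hbB n).1) (hbB n).2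
  let μ : Measure (ℤ → A) := Measure.sum fun n : ℕ => (2⁻¹ : ℝ≥0∞) ^ (n + 1) • ν n
  have hone {S : Set (ℤ → A)} (hS : MeasurableSet S) (h : ∀ n, ν n S = 1) : μ S = 1 := by
    simp [μ, Measure.sum_apply _ hS, h, ENNReal.tsum_geometric_add_one,
      ENNReal.one_sub_inv_two, ENNReal.inv_mul_cancel]
  have hμ1 : IsProbabilityMeasure μ := ⟨hone MeasurableSet.univ fun n => (hν n).measure_univ⟩
  have hμX : μ X = 1 := hone hX.1.measurableSet hνX
  refine ⟨μ, hμ1, hμX, map_shiftZ_eq ?_, fun U hU ⟨y, hyU, hyX⟩ => ?_⟩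
  · rw [Measure.map_sum (continuous_shiftZ _).aemeasurable]
    simp only [Measure.map_smul, hinv, μ]
  · obtain ⟨v, hv, hyv, hvU⟩ := hbasis.exists_subset_of_mem_open hyU hU
    obtain ⟨n, rfl⟩ : v ∈ Set.range b := hb ▸ ⟨hv, y, hyv, hyX⟩
    have hnull : μ Xᶜ = 0 := (prob_compl_eq_zero_iff hX.1.measurableSet).2 hμX
    rw [measure_inter_conull hnull]
    calc (0 : ℝ≥0∞) < ((2⁻¹ : ℝ≥0∞) ^ (n + 1) • ν n) (b n) := by
          simpa using ENNReal.mul_pos (by simp) (hpos n).ne'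
      _ ≤ μ (b n) := Measure.le_sum_apply _ _ |>.trans' (ENNReal.le_tsum n)
      _ ≤ μ U := measure_mono hvU
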